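/- Let R be a commutative ring and let T = R ⋉ R be the trivial extension of R by itself. Then the finitistic projective dimensions of T and of R coincide: for every nonnegative integer n, every T-module of finite projective dimension has projective dimension at most n over T if and only if every R-module of finite projective dimension has projective dimension at most n over R. -/

import Mathlib

open CategoryTheory

noncomputable section

universe u

/-- The `j`-th Ext group of the `R`-modules `M` and `N`. -/
def extGroup (R : Type u) [CommRing R] (M N : ModuleCat.{u} R) (j : ℕ) : ModuleCat R :=
  ((Ext R (ModuleCat.{u} R) j).obj (Opposite.op M)).obj N

/-- `Ext_R^j(M, N) = 0`. -/
def ExtVanish (R : Type u) [CommRing R] (M N : ModuleCat.{u} R) (j : ℕ) : Prop :=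
  Subsingleton (extGroup R M N j)

/-- The projective dimension of `M` is at most `n`
(via the standard Ext-vanishing characterization). -/
def ProjDimLE (R : Type u) [CommRing R] (M : ModuleCat.{u} R) (n : ℕ) : Prop :=
  ∀ (N : ModuleCat.{u} R) (j : ℕ), n < j → ExtVanish R M N j

/-- `M` has finite projective dimension. -/
def HasFinProjDim (R : Type u) [CommRing R] (M : ModuleCat.{u} R) : Prop :=
  ∃ n, ProjDimLE R M n

/-- `R` is a coherent ring: every finitely generated ideal is finitely presented. -/
def IsCoherentRing (R : Type u) [CommRing R] : Prop :=
  ∀ I : Ideal R, I.FG → Module.FinitePresentation R I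

/-!
Let `U` be restriction of scalars along `R → T` and `F = Hom_R(T, -)` its right adjoint. As `T` is
a Frobenius algebra over `R`, `F` is also left adjoint to `U`, so both functors are exact and
preserve projectives and upper bounds on projective dimension. The unit `N → U F N` splits, which
bounds the projective dimension of `N` by that of `F N`.

Conversely, a projective `T`-module `K` is a retract of `F U K`, hence relatively injective: a
monomorphism out of `K` which splits over `R` splits over `T`. Applied to the last step of a finite
projective resolution, this shows that a `T`-module `M` of finite projective dimension has
projective dimension at most that of `U M`.
-/

open Limits

section Ext

theorem subsingleton_ext_succ_iff_exactAt (R : Type*) [Ring R] {C : Type*} [Category* C] [Abelian C]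
    [Linear R C] [HasExt C] {X : C} (P : ProjectiveResolution X) (Y : C) (j : ℕ) :
    Subsingleton (Abelian.Ext X Y (j + 1)) ↔ (P.complex.linearYonedaObj R Y).ExactAt (j + 1) := by
  have exactAt_iff : (P.complex.linearYonedaObj R Y).ExactAt (j + 1) ↔
      ∀ f : P.complex.X (j + 1) ⟶ Y, P.complex.d (j + 2) (j + 1) ≫ f = 0 →
        ∃ g : P.complex.X j ⟶ Y, P.complex.d (j + 1) j ≫ g = f := by
    rw [HomologicalComplex.exactAt_iff' _ j (j + 1) (j + 2) (by simp) (by simp),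
      ShortComplex.moduleCat_exact_iff]
    rfl
  rw [exactAt_iff]
  constructor
  · intro _ f hf
    exact (P.extMk_eq_zero_iff f (j + 2) rfl hf j rfl).1 (Subsingleton.elim _ _)
  · intro h
    refine subsingleton_of_forall_eq 0 fun α => ?_
    obtain ⟨f, hf, rfl⟩ := P.extMk_surjective α (j + 2) rfl
    exact (P.extMk_eq_zero_iff f (j + 2) rfl hf j rfl).2 (h f hf)

variable {R : Type u} [CommRing R]

theorem extVanish_succ_iff (M N : ModuleCat.{u} R) (j : ℕ) :
    ExtVanish R M N (j + 1) ↔ Subsingleton (Abelian.Ext M N (j + 1)) := by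
  let P := projectiveResolution M
  rw [subsingleton_ext_succ_iff_exactAt R P, HomologicalComplex.exactAt_iff_isZero_homology,
    ← (P.isoExt (j + 1) N).isZero_iff, ModuleCat.isZero_iff_subsingleton]
  rfl

theorem projDimLE_iff_hasProjectiveDimensionLE (M : ModuleCat.{u} R) (n : ℕ) :
    ProjDimLE R M n ↔ HasProjectiveDimensionLE M n := by
  rw [HasProjectiveDimensionLE, hasProjectiveDimensionLT_iff]
  constructor
  · rintro h (_ | i) hi N e
    · omega
    · have := (extVanish_succ_iff M N i).1 (h N (i + 1) hi)
      exact Subsingleton.elim _ _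
  · rintro h N (_ | i) hi
    · omega
    · exact (extVanish_succ_iff M N i).2 (subsingleton_of_forall_eq 0 (h (i + 1) hi ·))

end Ext

section Adjunction

variable {C D : Type*} [Category* C] [Category* D] {F : C ⥤ D} {U : D ⥤ C}

theorem isSplitMono_of_isSplitMono_map [U.Faithful] (adj : F ⊣ U) (adj' : U ⊣ F) {K P : D}
    [Projective K] (i : K ⟶ P) [IsSplitMono (U.map i)] : IsSplitMono i := by
  let s : K ⟶ F.obj (U.obj K) := Projective.factorThru (𝟙 K) (adj.counit.app K)
  let φ : U.obj K ⟶ U.obj K := (adj'.homEquiv _ _).symm s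
  have extends_s : i ≫ adj'.homEquiv P _ (retraction (U.map i) ≫ φ) = s := by
    rw [← adj'.homEquiv_naturality_left, IsSplitMono.id_assoc, Equiv.apply_symm_apply]
  exact ⟨⟨adj'.homEquiv P _ (retraction (U.map i) ≫ φ) ≫ adj.counit.app K, by
    rw [reassoc_of% extends_s, Projective.factorThru_comp]⟩⟩

variable [Abelian C] [Abelian D]

theorem exists_shortExact_projective [EnoughProjectives C] (X : C) :
    ∃ (K P : C) (i : K ⟶ P) (p : P ⟶ X) (w : i ≫ p = 0),
      Projective P ∧ (ShortComplex.mk i p w).ShortExact := by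
  obtain ⟨⟨P, p⟩⟩ := EnoughProjectives.presentation X
  exact ⟨_, P, _, p, kernel.condition p, inferInstance, { exact := ShortComplex.exact_kernel p }⟩

theorem hasProjectiveDimensionLE_obj [EnoughProjectives C] (G : C ⥤ D) [G.Additive]
    [PreservesFiniteLimits G] [PreservesFiniteColimits G] [G.PreservesProjectiveObjects]
    {X : C} {n : ℕ} (hX : HasProjectiveDimensionLE X n) :
    HasProjectiveDimensionLE (G.obj X) n := by
  induction n generalizing X with
  | zero =>
    rw [← projective_iff_hasProjectiveDimensionLE_zero] at hX ⊢
    exact G.projective_obj X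
  | succ n ih =>
    obtain ⟨K, P, i, p, w, hP, hS⟩ := exists_shortExact_projective X
    have hK : HasProjectiveDimensionLE K n := (hS.hasProjectiveDimensionLT_X₃_iff n hP).1 hX
    exact ((hS.map_of_exact G).hasProjectiveDimensionLT_X₃_iff n (G.projective_obj P)).2 (ih hK)

theorem projective_X₃_of_projective_map_X₃ [U.Additive] [U.Faithful]
    (adj : F ⊣ U) (adj' : U ⊣ F) {S : ShortComplex D} (hS : S.ShortExact) [Projective S.X₁]
    [Projective S.X₂] [Projective (U.obj S.X₃)] : Projective S.X₃ := by
  have := adj.rightAdjoint_preservesLimits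
  have := adj'.leftAdjoint_preservesColimits
  have : Projective (S.map U).X₃ := ‹Projective (U.obj S.X₃)›
  have : IsSplitMono (U.map S.f) := (hS.map_of_exact U).splittingOfProjective.isSplitMono_f
  have := isSplitMono_of_isSplitMono_map adj adj' S.f
  have := hS.epi_g
  have σ := ShortComplex.Splitting.ofExactOfRetraction S hS.exact (retraction S.f)
    (IsSplitMono.id S.f) hS.epi_g
  exact (Retract.mk σ.s S.g σ.s_g).projective

theorem hasProjectiveDimensionLE_of_succ [EnoughProjectives D] [U.Additive] [U.Faithful]
    (adj : F ⊣ U) (adj' : U ⊣ F) {Y : D} {n : ℕ} (hY : HasProjectiveDimensionLE Y (n + 1))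
    (hUY : HasProjectiveDimensionLE (U.obj Y) n) : HasProjectiveDimensionLE Y n := by
  have := adj.rightAdjoint_preservesLimits
  have := adj'.leftAdjoint_preservesColimits
  have := adj.leftAdjoint_preservesColimits
  have := U.preservesProjectiveObjects_of_adjunction_of_preservesEpimorphisms adj'
  induction n generalizing Y with
  | zero =>
    obtain ⟨K, P, i, p, w, hP, hS⟩ := exists_shortExact_projective Y
    have hK : HasProjectiveDimensionLE K 0 := (hS.hasProjectiveDimensionLT_X₃_iff 0 hP).1 hY
    rw [← projective_iff_hasProjectiveDimensionLE_zero] at hUY hK ⊢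
    exact projective_X₃_of_projective_map_X₃ adj adj' hS
  | succ n ih =>
    obtain ⟨K, P, i, p, w, hP, hS⟩ := exists_shortExact_projective Y
    have hK := (hS.hasProjectiveDimensionLT_X₃_iff (n + 1) hP).1 hY
    have hUK := ((hS.map_of_exact U).hasProjectiveDimensionLT_X₃_iff n (U.projective_obj P)).1 hUY
    exact (hS.hasProjectiveDimensionLT_X₃_iff n hP).2 (ih hK hUK)

theorem hasProjectiveDimensionLE_of_obj [EnoughProjectives D] [U.Additive] [U.Faithful]
    (adj : F ⊣ U) (adj' : U ⊣ F) {Y : D} {k n : ℕ} (hY : HasProjectiveDimensionLE Y k)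
    (hUY : HasProjectiveDimensionLE (U.obj Y) n) : HasProjectiveDimensionLE Y n := by
  induction k with
  | zero => exact hasProjectiveDimensionLT_of_ge Y 1 (n + 1) (by omega)
  | succ k ih =>
    obtain hk | hk := Nat.lt_or_ge k n
    · exact hasProjectiveDimensionLT_of_ge Y (k + 2) (n + 1) (by omega)
    · have : HasProjectiveDimensionLE (U.obj Y) k :=
        hasProjectiveDimensionLT_of_ge _ (n + 1) (k + 1) (by omega)
      exact ih (hasProjectiveDimensionLE_of_succ adj adj' hY this)

theorem forall_hasProjectiveDimensionLE_iff [EnoughProjectives C] [EnoughProjectives D] [U.Additive]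
    [U.Faithful] (adj : F ⊣ U) (adj' : U ⊣ F) [∀ X, IsSplitMono (adj.unit.app X)] (n : ℕ) :
    (∀ Y : D, (∃ k, HasProjectiveDimensionLE Y k) → HasProjectiveDimensionLE Y n) ↔
      ∀ X : C, (∃ k, HasProjectiveDimensionLE X k) → HasProjectiveDimensionLE X n := by
  have := adj.left_adjoint_additive
  have := adj.leftAdjoint_preservesColimits
  have := adj.rightAdjoint_preservesLimits
  have := adj'.leftAdjoint_preservesColimits
  have := adj'.rightAdjoint_preservesLimits
  have := F.preservesProjectiveObjects_of_adjunction_of_preservesEpimorphisms adj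
  have := U.preservesProjectiveObjects_of_adjunction_of_preservesEpimorphisms adj'
  constructor
  · rintro h X ⟨k, hX⟩
    have hFX := h (F.obj X) ⟨k, hasProjectiveDimensionLE_obj F hX⟩
    have : HasProjectiveDimensionLE (U.obj (F.obj X)) n := hasProjectiveDimensionLE_obj U hFX
    let unit_retract : Retract X (U.obj (F.obj X)) :=
      ⟨adj.unit.app X, retraction _, IsSplitMono.id _⟩
    exact unit_retract.hasProjectiveDimensionLT (n + 1)
  · rintro h Y ⟨k, hY⟩
    exact hasProjectiveDimensionLE_of_obj adj adj' hY
      (h (U.obj Y) ⟨k, hasProjectiveDimensionLE_obj U hY⟩)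

end Adjunction

section CoextendScalars

open ModuleCat

variable {R S : Type u} [CommRing R] [Ring S] [Algebra R S]

/-- Coinduced modules as `Hom_R(S, N)`, with `S` an `R`-module through its algebra structure;
`ModuleCat.CoextendScalars` restricts the regular `S`-module along `algebraMap R S` instead. -/
def coextendScalarsEquiv (N : ModuleCat.{u} R) :
    (coextendScalars (algebraMap R S)).obj N ≃+ (S →ₗ[R] N) where
  toFun φ :=
    { toFun s := φ s
      map_add' := (CoextendScalars.equiv _ N φ).map_add
      map_smul' r s := by
        rw [Algebra.smul_def]
        exact (CoextendScalars.equiv _ N φ).map_smul r s }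
  invFun φ := (CoextendScalars.equiv (algebraMap R S) N).symm
    { toFun (s : S) := φ s
      map_add' := φ.map_add
      map_smul' r (s : S) := by
        rw [RingHom.id_apply, ← φ.map_smul, Algebra.smul_def]
        rfl }
  left_inv _ := rfl
  right_inv _ := rfl
  map_add' _ _ := rfl

instance isScalarTower_restrictScalars (M : ModuleCat.{u} S) :
    IsScalarTower R S ((restrictScalars (algebraMap R S)).obj M) :=
  .of_algebraMap_smul fun _ _ => rfl

theorem coextendScalarsEquiv_map {N N' : ModuleCat.{u} R} (g : N ⟶ N')
    (φ : (coextendScalars (algebraMap R S)).obj N) :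
    coextendScalarsEquiv N' ((coextendScalars (algebraMap R S)).map g φ) =
      g.hom ∘ₗ coextendScalarsEquiv N φ :=
  rfl

theorem coextendScalarsEquiv_smul {N : ModuleCat.{u} R} (s : S)
    (φ : (coextendScalars (algebraMap R S)).obj N) :
    coextendScalarsEquiv N (s • φ) = coextendScalarsEquiv N φ ∘ₗ LinearMap.mulRight R s :=
  rfl

end CoextendScalars

/-- A Frobenius algebra structure on `S` over `R`: a linear form together with a pair of dual
families for the pairing `(s, t) ↦ form (s * t)`. The families are stored as data because the
transfer is the sum over them. -/
structure FrobeniusSystem (R S ι : Type*) [CommRing R] [Ring S] [Algebra R S] [Fintype ι] where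
  form : S →ₗ[R] R
  left : ι → S
  right : ι → S
  sum_form_mul_left_smul_right (s : S) : ∑ i, form (s * left i) • right i = s
  sum_form_right_mul_smul_left (s : S) : ∑ i, form (right i * s) • left i = s

namespace FrobeniusSystem

/-- The trivial extension `R ⋉ R` is a Frobenius algebra: for the form `snd`, the basis `(1, ε)`
is dual to `(ε, 1)`. -/
def trivSqZeroExt (R : Type*) [CommRing R] : FrobeniusSystem R (TrivSqZeroExt R R) (Fin 2) where
  form := TrivSqZeroExt.sndHom R R
  left := ![1, TrivSqZeroExt.inr 1]
  right := ![TrivSqZeroExt.inr 1, 1]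
  sum_form_mul_left_smul_right s := by ext <;> simp [Fin.sum_univ_two]
  sum_form_right_mul_smul_left s := by ext <;> simp [Fin.sum_univ_two]

section Ring

variable {R S ι : Type*} [CommRing R] [Ring S] [Algebra R S] [Fintype ι]
  (b : FrobeniusSystem R S ι)

theorem sum_form_mul_left_smul_map_right {N : Type*} [AddCommGroup N] [Module R N] (φ : S →ₗ[R] N)
    (s : S) : ∑ i, b.form (s * b.left i) • φ (b.right i) = φ s := by
  simp only [← map_smul, ← map_sum, b.sum_form_mul_left_smul_right]

/-- The transfer (relative trace) `φ ↦ ∑ i, left i • φ (right i)`, the map underlying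
`coextendRestrictCounit`. -/
def transfer (M : Type*) [AddCommGroup M] [Module R M] [Module S M] : (S →ₗ[R] M) →+ M where
  toFun φ := ∑ i, b.left i • φ (b.right i)
  map_zero' := by simp
  map_add' φ ψ := by simp only [LinearMap.add_apply, smul_add, Finset.sum_add_distrib]

theorem transfer_apply {M : Type*} [AddCommGroup M] [Module R M] [Module S M] (φ : S →ₗ[R] M) :
    b.transfer M φ = ∑ i, b.left i • φ (b.right i) :=
  rfl

theorem transfer_comp_mulRight {M : Type*} [AddCommGroup M] [Module R M] [Module S M]
    [IsScalarTower R S M] (φ : S →ₗ[R] M) (s : S) :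
    b.transfer M (φ ∘ₗ LinearMap.mulRight R s) = s • b.transfer M φ := by
  calc b.transfer M (φ ∘ₗ LinearMap.mulRight R s)
      = ∑ i, b.left i • φ (b.right i * s) := b.transfer_apply _
    _ = ∑ i, ∑ j, b.left i • b.form (b.right i * s * b.left j) • φ (b.right j) := by
        simp only [← Finset.smul_sum, b.sum_form_mul_left_smul_map_right]
    _ = ∑ j, (∑ i, b.form (b.right i * (s * b.left j)) • b.left i) • φ (b.right j) := by
        rw [Finset.sum_comm]
        refine Finset.sum_congr rfl fun j _ => ?_
        simp only [Finset.sum_smul, smul_assoc, smul_comm (b.left _), mul_assoc]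
    _ = s • b.transfer M φ := by
        simp only [b.sum_form_right_mul_smul_left, b.transfer_apply, Finset.smul_sum, mul_smul]

theorem transfer_form_smulRight {M : Type*} [AddCommGroup M] [Module R M] [Module S M]
    [IsScalarTower R S M] (m : M) : b.transfer M (b.form.smulRight m) = m := by
  calc b.transfer M (b.form.smulRight m)
      = ∑ i, b.left i • b.form (b.right i) • m := b.transfer_apply _
    _ = (∑ i, b.form (b.right i * 1) • b.left i) • m := by
        simp only [mul_one, Finset.sum_smul, smul_assoc, smul_comm (b.left _)]
    _ = m := by rw [b.sum_form_right_mul_smul_left, one_smul]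

end Ring

section Adjunction

open ModuleCat

variable {R S : Type u} {ι : Type*} [CommRing R] [Ring S] [Algebra R S] [Fintype ι]
  (b : FrobeniusSystem R S ι)

/-- The map `N → Hom_R(S, N)` sending `n` to `s ↦ form s • n`, the unit of
`coextendRestrictScalarsAdj`. -/
def coextendRestrictUnit (N : ModuleCat.{u} R) :
    N ⟶ (restrictScalars (algebraMap R S)).obj ((coextendScalars (algebraMap R S)).obj N) :=
  ofHom (Y := (restrictScalars (algebraMap R S)).obj ((coextendScalars (algebraMap R S)).obj N))
    { toFun n := (coextendScalarsEquiv N).symm (b.form.smulRight n)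
      map_add' m n := (coextendScalarsEquiv N).injective <| LinearMap.ext fun s =>
        smul_add (b.form s) m n
      map_smul' r n := (coextendScalarsEquiv N).injective <| LinearMap.ext fun s => by
        change b.form s • r • n = b.form (s * algebraMap R S r) • n
        rw [← Algebra.commutes, ← Algebra.smul_def, map_smul, smul_comm, smul_assoc] }

/-- The transfer `Hom_R(S, M) → M` as an `S`-linear map, the counit of
`coextendRestrictScalarsAdj`. -/
def coextendRestrictCounit (M : ModuleCat.{u} S) :
    (coextendScalars (algebraMap R S)).obj ((restrictScalars (algebraMap R S)).obj M) ⟶ M :=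
  ofHom (Y := M)
    { (b.transfer ((restrictScalars (algebraMap R S)).obj M)).comp
        (coextendScalarsEquiv ((restrictScalars (algebraMap R S)).obj M)).toAddMonoidHom with
      map_smul' s φ :=
        (congrArg (b.transfer _) (coextendScalarsEquiv_smul s φ)).trans
          (b.transfer_comp_mulRight _ s) }

theorem coextendScalarsEquiv_transfer {N : ModuleCat.{u} R}
    (Φ : S →ₗ[R]
      (restrictScalars (algebraMap R S)).obj ((coextendScalars (algebraMap R S)).obj N)) (s : S) :
    coextendScalarsEquiv N (b.transfer
        ((restrictScalars (algebraMap R S)).obj ((coextendScalars (algebraMap R S)).obj N)) Φ) s =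
      ∑ i, coextendScalarsEquiv N (Φ (b.right i)) (s * b.left i) := by
  refine (congrArg (· s) (map_sum (coextendScalarsEquiv N) _ _)).trans ?_
  exact LinearMap.sum_apply _ _ s

/-- Over a Frobenius algebra, coextension of scalars is left adjoint to restriction, besides being
its right adjoint as over every algebra. -/
def coextendRestrictScalarsAdj :
    coextendScalars.{u, u, u} (algebraMap R S) ⊣ restrictScalars.{u, u, u} (algebraMap R S) :=
  Adjunction.mkOfUnitCounit
    { unit :=
        { app := b.coextendRestrictUnit
          naturality N N' g := ModuleCat.hom_ext <| LinearMap.ext fun n =>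
            (coextendScalarsEquiv N').injective <| by
              have smulRight_map : b.form.smulRight (g.hom n) = g.hom ∘ₗ b.form.smulRight n :=
                LinearMap.ext fun s => (map_smul g.hom (b.form s) n).symm
              exact smulRight_map.trans (coextendScalarsEquiv_map g
                ((coextendScalarsEquiv N).symm (b.form.smulRight n))).symm }
      counit :=
        { app := b.coextendRestrictCounit
          naturality M M' g := ModuleCat.hom_ext <| LinearMap.ext fun φ => by
            refine .trans ?_ (map_sum g.hom _ _).symm
            exact Finset.sum_congr rfl fun i _ => (map_smul g.hom _ _).symm }
      left_triangle := by
        ext N φ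
        exact (coextendScalarsEquiv N).injective <| LinearMap.ext fun s =>
          (b.coextendScalarsEquiv_transfer _ s).trans
            (b.sum_form_mul_left_smul_map_right (coextendScalarsEquiv N φ) s)
      right_triangle := by
        ext M m
        exact b.transfer_form_smulRight (M := (restrictScalars (algebraMap R S)).obj M) m }

theorem isSplitMono_coextendRestrictScalarsAdj_unit (hb : Function.Surjective b.form)
    (N : ModuleCat.{u} R) : IsSplitMono (b.coextendRestrictScalarsAdj.unit.app N) := by
  obtain ⟨a, ha⟩ := hb 1
  let evalAt : (restrictScalars (algebraMap R S)).obj ((coextendScalars (algebraMap R S)).obj N) ⟶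
      N :=
    ofHom (X := (restrictScalars (algebraMap R S)).obj ((coextendScalars (algebraMap R S)).obj N))
      { toFun φ := coextendScalarsEquiv N φ a
        map_add' φ ψ := rfl
        map_smul' r φ := by
          change coextendScalarsEquiv N φ (a * algebraMap R S r) = r • coextendScalarsEquiv N φ a
          rw [← Algebra.commutes, ← Algebra.smul_def, map_smul] }
  refine ⟨⟨evalAt, ?_⟩⟩
  ext n
  change b.form a • n = n
  rw [ha, one_smul]

end Adjunction

end FrobeniusSystem

theorem stmt5_general {R S : Type u} {ι : Type*} [CommRing R] [CommRing S] [Algebra R S]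
    [Fintype ι] (b : FrobeniusSystem R S ι) (hb : Function.Surjective b.form) (n : ℕ) :
    (∀ M : ModuleCat.{u} S, HasFinProjDim S M → ProjDimLE S M n) ↔
      ∀ M : ModuleCat.{u} R, HasFinProjDim R M → ProjDimLE R M n := by
  have := b.isSplitMono_coextendRestrictScalarsAdj_unit hb
  simp only [HasFinProjDim, projDimLE_iff_hasProjectiveDimensionLE]
  exact forall_hasProjectiveDimensionLE_iff b.coextendRestrictScalarsAdj
    (ModuleCat.restrictCoextendScalarsAdj.{u} (algebraMap R S)) n

theorem stmt5 (R : Type u) [CommRing R] (n : ℕ) :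
    (∀ (M : ModuleCat.{u} (TrivSqZeroExt R R)), HasFinProjDim (TrivSqZeroExt R R) M →
      ProjDimLE (TrivSqZeroExt R R) M n) ↔
    (∀ (M : ModuleCat.{u} R), HasFinProjDim R M → ProjDimLE R M n) :=
  stmt5_general (.trivSqZeroExt R) TrivSqZeroExt.snd_surjective n

end
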